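/- Let A be a generic n×n matrix over the quaternions ℍ. Then the absolute value |D_{I,J}(A)| (the quaternionic norm √(ν(D_{I,J}(A)))) is the same for all orderings I, J of {1,…,n}; that is, for any orderings I, J, I′, J′ of {1,…,n}, ν(D_{I,J}(A)) = ν(D_{I′,J′}(A)). -/

import Mathlib

/-!
The invariant behind the theorem is the Study determinant. Sending a quaternion to the usual
`2 × 2` complex matrix (`quatMat`) turns an `n × n` quaternionic matrix into a `2n × 2n` complex
one; let `study` be the norm of the determinant of the latter. It is multiplicative, is
unchanged by arbitrary relabelings of rows and of columns, and equals `ν(h)` on a `1 × 1`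
matrix `(h)`.

A quasideterminant `|A|_{ij}` is the Schur complement of `A^{ij}`, so the corresponding block
`LDU` factorization gives `study A = ν(|A|_{ij}) * study (A^{ij})` (`study_eq_normSq_qdet_mul`).
Applying this at each factor of `D_{I,J}(A)` and telescoping yields `ν(D_{I,J}(A)) = study A`
(`normSq_DIJ`), in which `I` and `J` no longer appear.
-/

open Matrix

variable {R : Type*} [Ring R]

/-- The submatrix of `A` obtained by deleting row `i` and column `j`,
with rows and columns retaining their original labels. -/
def delSub {I J : Type*} (A : Matrix I J R) (i : I) (j : J) :
    Matrix {p : I // p ≠ i} {q : J // q ≠ j} R :=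
  A.submatrix Subtype.val Subtype.val

/-- A (possibly rectangular-typed) matrix is invertible if it has a two-sided inverse. -/
def HasTwoSidedInv {I J : Type*} [Fintype I] [Fintype J] [DecidableEq I] [DecidableEq J]
    (M : Matrix I J R) : Prop :=
  ∃ B : Matrix J I R, M * B = 1 ∧ B * M = 1

/-- The quasideterminant `|A|_{ij}` is defined iff `A^{ij}` is invertible. -/
def QdetDefined {I J : Type*} [Fintype I] [Fintype J] [DecidableEq I] [DecidableEq J]
    (A : Matrix I J R) (i : I) (j : J) : Prop :=
  HasTwoSidedInv (delSub A i j)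

/- The quasideterminant `|A|_{ij} = a_{ij} - r_i^j (A^{ij})⁻¹ c_j^i` (junk value `0`
if `A^{ij}` is not invertible). -/
open Classical in
noncomputable def qdet {I J : Type*} [Fintype I] [Fintype J] [DecidableEq I] [DecidableEq J]
    (A : Matrix I J R) (i : I) (j : J) : R :=
  if h : QdetDefined A i j then
    A i j - ∑ p : {p : I // p ≠ i}, ∑ q : {q : J // q ≠ j},
      A i q.val * (Exists.choose h) q p * A p.val j
  else 0

/-- A square matrix is generic if all of its square submatrices (including itself)
are invertible. -/
def Generic {n : ℕ} (A : Matrix (Fin n) (Fin n) R) : Prop :=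
  ∀ S T : Finset (Fin n), S.card = T.card →
    HasTwoSidedInv (A.submatrix (Subtype.val : {p : Fin n // p ∈ S} → Fin n)
      (Subtype.val : {q : Fin n // q ∈ T} → Fin n))

/- `D_{I,J}(A) = |A|_{i₁j₁} |A^{i₁j₁}|_{i₂j₂} ⋯ a_{i_n j_n}`, where `I = (σ 1, …, σ n)`
and `J = (τ 1, …, τ n)`; at step `k`, the quasideterminant of the submatrix of `A`
obtained by deleting rows `i₁,…,i_{k−1}` and columns `j₁,…,j_{k−1}` is taken at
position `(i_k, j_k)`. -/
noncomputable def DIJ {R : Type*} [Ring R] {n : ℕ} (A : Matrix (Fin n) (Fin n) R)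
    (σ τ : Equiv.Perm (Fin n)) : R :=
  ((List.finRange n).map (fun k =>
    qdet (A.submatrix (Subtype.val : {p : Fin n // k ≤ σ.symm p} → Fin n)
      (Subtype.val : {q : Fin n // k ≤ τ.symm q} → Fin n))
      ⟨σ k, by simp⟩ ⟨τ k, by simp⟩)).prod

/-- The basic predeterminant `Δ(A) = D_{(1,…,n),(1,…,n)}(A)`. -/
noncomputable def Delta {R : Type*} [Ring R] {n : ℕ} (A : Matrix (Fin n) (Fin n) R) : R :=
  DIJ A (Equiv.refl (Fin n)) (Equiv.refl (Fin n))

open scoped Quaternion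

/-- The standard embedding of the quaternions into `2 × 2` complex matrices,
`a + bi + cj + dk ↦ !![a + bi, c + di; -c + di, a - bi]`. -/
noncomputable def quatMat : ℍ[ℝ] →+* Matrix (Fin 2) (Fin 2) ℂ where
  toFun h := !![⟨h.re, h.imI⟩, ⟨h.imJ, h.imK⟩; ⟨-h.imJ, h.imK⟩, ⟨h.re, -h.imI⟩]
  map_one' := by
    ext i j
    fin_cases i <;> fin_cases j <;> apply Complex.ext <;> simp
  map_zero' := by
    ext i j
    fin_cases i <;> fin_cases j <;> apply Complex.ext <;> simp
  map_mul' x y := by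
    ext i j
    fin_cases i <;> fin_cases j <;> apply Complex.ext <;>
      simp [Matrix.mul_apply, Fin.sum_univ_two] <;> ring
  map_add' x y := by
    ext i j
    fin_cases i <;> fin_cases j <;> apply Complex.ext <;> simp <;> ring

theorem det_quatMat (h : ℍ[ℝ]) : (quatMat h).det = (Quaternion.normSq h : ℝ) := by
  rw [Matrix.det_fin_two, Quaternion.normSq_def']
  apply Complex.ext <;> simp [quatMat, sq] <;> ring

/-- The complex matrix, with rows and columns indexed by pairs, obtained by replacing each
quaternionic entry by its `2 × 2` complex block. -/
noncomputable def complexify {I J : Type*} (A : Matrix I J ℍ[ℝ]) :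
    Matrix (I × Fin 2) (J × Fin 2) ℂ :=
  Matrix.comp I J (Fin 2) (Fin 2) ℂ (A.map quatMat)

/-- The Study determinant of a quaternionic matrix, taken as the norm of the complex
determinant so that invariance under independent row and column relabelings is immediate. -/
noncomputable def study {I : Type*} [Fintype I] [DecidableEq I] (A : Matrix I I ℍ[ℝ]) : ℝ :=
  ‖(complexify A).det‖

section Study

variable {I J P : Type*} [Fintype I] [DecidableEq I] [Fintype J] [DecidableEq J]
  [Fintype P] [DecidableEq P]

theorem study_mul (A B : Matrix I I ℍ[ℝ]) : study (A * B) = study A * study B := by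
  have h : complexify (A * B) = complexify A * complexify B := by
    have := map_mul (Matrix.compRingEquiv I (Fin 2) ℂ) (A.map quatMat) (B.map quatMat)
    rw [← Matrix.map_mul] at this
    exact this
  rw [study, h, Matrix.det_mul, norm_mul]
  rfl

theorem study_one : study (1 : Matrix I I ℍ[ℝ]) = 1 := by
  have h : complexify (1 : Matrix I I ℍ[ℝ]) = 1 := by
    have := map_one (Matrix.compRingEquiv I (Fin 2) ℂ)
    rw [← Matrix.map_one quatMat (map_zero _) (map_one _)] at this
    exact this
  rw [study, h, Matrix.det_one, norm_one]

theorem norm_det_submatrix_equiv (e f : J ≃ I) (A : Matrix I I ℂ) :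
    ‖(A.submatrix e f).det‖ = ‖A.det‖ := by
  have h : A.submatrix e f = (A.submatrix id (e.symm.trans f)).submatrix e e := by
    ext
    simp
  rw [h, Matrix.det_submatrix_equiv_self, Matrix.det_permute', norm_mul]
  rcases Int.units_eq_one_or (Equiv.Perm.sign (e.symm.trans f)) with h | h <;> simp [h]

theorem study_submatrix_equiv (e f : J ≃ I) (A : Matrix I I ℍ[ℝ]) :
    study (A.submatrix e f) = study A :=
  norm_det_submatrix_equiv (e.prodCongr (Equiv.refl (Fin 2)))
    (f.prodCongr (Equiv.refl (Fin 2))) (complexify A)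

theorem complexify_fromBlocks {I J K L : Type*} (X : Matrix I J ℍ[ℝ]) (Y : Matrix I K ℍ[ℝ])
    (Z : Matrix L J ℍ[ℝ]) (W : Matrix L K ℍ[ℝ]) :
    complexify (Matrix.fromBlocks X Y Z W) =
      (Matrix.fromBlocks (complexify X) (complexify Y) (complexify Z) (complexify W)).submatrix
        (Equiv.sumProdDistrib I L (Fin 2)) (Equiv.sumProdDistrib J K (Fin 2)) := by
  ext ⟨i | i, a⟩ ⟨j | j, b⟩ <;> rfl

theorem complexify_zero {K L : Type*} : complexify (0 : Matrix K L ℍ[ℝ]) = 0 := by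
  ext
  simp [complexify]

theorem study_fromBlocks_zero₂₁ (X : Matrix I I ℍ[ℝ]) (Y : Matrix I J ℍ[ℝ])
    (W : Matrix J J ℍ[ℝ]) : study (Matrix.fromBlocks X Y 0 W) = study X * study W := by
  rw [study, complexify_fromBlocks, Matrix.det_submatrix_equiv_self, complexify_zero,
    Matrix.det_fromBlocks_zero₂₁, norm_mul]
  rfl

theorem study_fromBlocks_zero₁₂ (X : Matrix I I ℍ[ℝ]) (Z : Matrix J I ℍ[ℝ])
    (W : Matrix J J ℍ[ℝ]) : study (Matrix.fromBlocks X 0 Z W) = study X * study W := by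
  rw [study, complexify_fromBlocks, Matrix.det_submatrix_equiv_self, complexify_zero,
    Matrix.det_fromBlocks_zero₁₂, norm_mul]
  rfl

theorem study_unit (A : Matrix Unit Unit ℍ[ℝ]) :
    study A = Quaternion.normSq (A () ()) := by
  have h : complexify A =
      (quatMat (A () ())).submatrix (Equiv.punitProd (Fin 2)) (Equiv.punitProd (Fin 2)) := by
    ext ⟨i, a⟩ ⟨j, b⟩
    rfl
  rw [study, h, Matrix.det_submatrix_equiv_self, det_quatMat, Complex.norm_real,
    Real.norm_of_nonneg Quaternion.normSq_nonneg]

/-- The block `LDU` factorization with the Schur complement of the invertible block `M`. -/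
theorem study_schur (a : Matrix Unit Unit ℍ[ℝ]) (r : Matrix Unit P ℍ[ℝ])
    (c : Matrix P Unit ℍ[ℝ]) (M B : Matrix P P ℍ[ℝ]) (hMB : M * B = 1) (hBM : B * M = 1) :
    study (Matrix.fromBlocks a r c M) =
      Quaternion.normSq ((a - r * B * c) () ()) * study M := by
  have h : Matrix.fromBlocks a r c M = Matrix.fromBlocks 1 (r * B) 0 1 *
      Matrix.fromBlocks (a - r * B * c) 0 0 M * Matrix.fromBlocks 1 0 (B * c) 1 := by
    simp only [Matrix.fromBlocks_multiply, Matrix.one_mul, Matrix.mul_one, Matrix.zero_mul,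
      Matrix.mul_zero, add_zero, zero_add]
    rw [← Matrix.mul_assoc M, hMB, Matrix.one_mul, Matrix.mul_assoc r B M, hBM,
      Matrix.mul_one, Matrix.mul_assoc r B c, sub_add_cancel]
  rw [h, study_mul, study_mul, study_fromBlocks_zero₂₁, study_fromBlocks_zero₂₁,
    study_fromBlocks_zero₁₂, study_one, study_one, study_unit]
  ring

/-- Removing the row and column of a quasideterminant divides the Study determinant by the norm
of that quasideterminant. The equivalences identify row and column labels of `A` with a common
set in which the distinguished row and column are `Sum.inl ()`. -/
theorem study_eq_normSq_qdet_mul (A : Matrix I J ℍ[ℝ]) (e : Unit ⊕ P ≃ I) (f : Unit ⊕ P ≃ J)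
    (i : I) (j : J) (hi : e (Sum.inl ()) = i) (hj : f (Sum.inl ()) = j)
    (h : QdetDefined A i j) :
    study (A.submatrix e f) =
      Quaternion.normSq (qdet A i j) * study (A.submatrix (e ∘ Sum.inr) (f ∘ Sum.inr)) := by
  subst hi hj
  obtain ⟨hMB, hBM⟩ := Exists.choose_spec h
  have hq : qdet A (e (Sum.inl ())) (f (Sum.inl ())) = _ := dif_pos h
  set B := Exists.choose h
  let e' : P ≃ {p : I // p ≠ e (Sum.inl ())} :=
    Equiv.ofBijective (fun p => ⟨e (Sum.inr p), by simp⟩)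
      ⟨fun x y hxy => by simpa using hxy, fun ⟨p, hp⟩ => by
        obtain ⟨x | x, rfl⟩ := e.surjective p
        · exact absurd rfl hp
        · exact ⟨x, rfl⟩⟩
  let f' : P ≃ {q : J // q ≠ f (Sum.inl ())} :=
    Equiv.ofBijective (fun p => ⟨f (Sum.inr p), by simp⟩)
      ⟨fun x y hxy => by simpa using hxy, fun ⟨p, hp⟩ => by
        obtain ⟨x | x, rfl⟩ := f.surjective p
        · exact absurd rfl hp
        · exact ⟨x, rfl⟩⟩
  have hM : A.submatrix (e ∘ Sum.inr) (f ∘ Sum.inr) = (delSub A _ _).submatrix e' f' := rfl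
  have hblocks : A.submatrix e f = Matrix.fromBlocks
      (A.submatrix (e ∘ Sum.inl) (f ∘ Sum.inl)) (A.submatrix (e ∘ Sum.inl) (f ∘ Sum.inr))
      (A.submatrix (e ∘ Sum.inr) (f ∘ Sum.inl)) (A.submatrix (e ∘ Sum.inr) (f ∘ Sum.inr)) := by
    ext (x | x) (y | y) <;> rfl
  rw [hblocks, study_schur _ _ _ _ (B.submatrix f' e'), hq]
  · congr 2
    rw [Matrix.sub_apply, Matrix.mul_apply]
    simp only [Matrix.mul_apply, Finset.sum_mul]
    congr 1
    rw [← Equiv.sum_comp e']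
    refine Finset.sum_congr rfl fun x _ => ?_
    rw [← Equiv.sum_comp f']
    rfl
  · rw [hM, Matrix.submatrix_mul_equiv, hMB, Matrix.submatrix_one_equiv]
  · rw [hM, Matrix.submatrix_mul_equiv, hBM, Matrix.submatrix_one_equiv]

theorem HasTwoSidedInv.submatrix {I' J' : Type*} [Fintype I'] [DecidableEq I'] [Fintype J']
    [DecidableEq J'] {M : Matrix I J ℍ[ℝ]} (h : HasTwoSidedInv M) (e : I' ≃ I) (f : J' ≃ J) :
    HasTwoSidedInv (M.submatrix e f) := by
  obtain ⟨B, h₁, h₂⟩ := h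
  refine ⟨B.submatrix f e, ?_, ?_⟩
  · rw [Matrix.submatrix_mul_equiv, h₁, Matrix.submatrix_one_equiv]
  · rw [Matrix.submatrix_mul_equiv, h₂, Matrix.submatrix_one_equiv]

end Study

theorem telescope_prod {n : ℕ} (q : Fin n → ℝ) (F : ℕ → ℝ)
    (h : ∀ k : Fin n, F k = q k * F (k + 1)) : F 0 = (∏ k, q k) * F n := by
  induction n with
  | zero => simp
  | succ n ih =>
    rw [Fin.prod_univ_castSucc, ih (fun k => q k.castSucc) (fun k => h k.castSucc), mul_assoc]
    congr 1
    exact h (Fin.last n)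

/-- Splitting off the least index `k` from `{m | k ≤ m}`. -/
def splitMin {n : ℕ} (k : Fin n) :
    Unit ⊕ {m : Fin n // (k : ℕ) + 1 ≤ m} ≃ {m : Fin n // (k : ℕ) ≤ m} where
  toFun := Sum.elim (fun _ => ⟨k, le_rfl⟩) (fun m => ⟨m.1, by have := m.2; omega⟩)
  invFun m := if h : m.1 = k then Sum.inl () else
    Sum.inr ⟨m.1, by
      have := m.2
      have : (m.1 : ℕ) ≠ k := fun h' => h (Fin.ext h')
      omega⟩
  left_inv x := by
    rcases x with x | ⟨m, hm⟩
    · simp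
    · have : m ≠ k := by
        rintro rfl
        omega
      simp [this]
  right_inv m := by
    by_cases h : m.1 = k
    · simp [h, Subtype.ext_iff]
    · simp [h]

/-- The labels that survive the deletion of the first `k` ones, listed by their position in the
ordering `σ`. -/
def tailEquiv {n : ℕ} (σ : Equiv.Perm (Fin n)) (k : Fin n) :
    {m : Fin n // (k : ℕ) ≤ m} ≃ {p : Fin n // k ≤ σ.symm p} :=
  σ.subtypeEquiv fun m => by rw [Equiv.symm_apply_apply, Fin.le_def]

/-- Deleting the label `σ k` leaves the labels at positions beyond `k`. -/
def delTailEquiv {n : ℕ} (σ : Equiv.Perm (Fin n)) (k : Fin n) :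
    {p : {p : Fin n // k ≤ σ.symm p} // p ≠ ⟨σ k, by simp⟩} ≃
      {p : Fin n // p ∈ Finset.univ.filter fun p => k < σ.symm p} where
  toFun p := ⟨p.1.1, by
    simp only [Finset.mem_filter, Finset.mem_univ, true_and]
    refine lt_of_le_of_ne p.1.2 fun h => p.2 (Subtype.ext ?_)
    simp [h]⟩
  invFun p := ⟨⟨p.1, (Finset.mem_filter.1 p.2).2.le⟩, fun h => by
    have h₁ := (Finset.mem_filter.1 p.2).2
    have h₂ : p.1 = σ k := congrArg Subtype.val h
    simp [h₂] at h₁⟩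
  left_inv _ := rfl
  right_inv _ := rfl

theorem card_filter_lt_symm {n : ℕ} (σ : Equiv.Perm (Fin n)) (k : Fin n) :
    (Finset.univ.filter fun p => k < σ.symm p).card =
      (Finset.univ.filter fun p : Fin n => k < p).card :=
  Finset.card_equiv σ.symm fun p => by simp

theorem Generic.qdetDefined {n : ℕ} {A : Matrix (Fin n) (Fin n) ℍ[ℝ]} (hA : Generic A)
    (σ τ : Equiv.Perm (Fin n)) (k : Fin n) :
    QdetDefined (A.submatrix (Subtype.val : {p : Fin n // k ≤ σ.symm p} → Fin n)
      (Subtype.val : {q : Fin n // k ≤ τ.symm q} → Fin n))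
      ⟨σ k, by simp⟩ ⟨τ k, by simp⟩ :=
  (hA (Finset.univ.filter fun p => k < σ.symm p) (Finset.univ.filter fun p => k < τ.symm p)
    (by rw [card_filter_lt_symm, card_filter_lt_symm])).submatrix
      (delTailEquiv σ k) (delTailEquiv τ k)

theorem normSq_DIJ {n : ℕ} {A : Matrix (Fin n) (Fin n) ℍ[ℝ]} (hA : Generic A)
    (σ τ : Equiv.Perm (Fin n)) : Quaternion.normSq (DIJ A σ τ) = study A := by
  -- `F k` is the Study determinant of what remains after `k` deletions.
  let F : ℕ → ℝ := fun k => study ((A.submatrix σ τ).submatrix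
    (Subtype.val : {m : Fin n // k ≤ m} → Fin n) (Subtype.val : {m : Fin n // k ≤ m} → Fin n))
  have hstep := telescope_prod (fun k : Fin n => Quaternion.normSq
    (qdet (A.submatrix (Subtype.val : {p : Fin n // k ≤ σ.symm p} → Fin n)
      (Subtype.val : {q : Fin n // k ≤ τ.symm q} → Fin n))
      ⟨σ k, by simp⟩ ⟨τ k, by simp⟩)) F fun k => by
    have h := study_eq_normSq_qdet_mul _ ((splitMin k).trans (tailEquiv σ k))
      ((splitMin k).trans (tailEquiv τ k)) _ _ rfl rfl (hA.qdetDefined σ τ k)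
    refine Eq.trans ?_ h
    exact (study_submatrix_equiv (splitMin k) (splitMin k) _).symm
  have hF0 : F 0 = study A := by
    let e : {m : Fin n // 0 ≤ (m : ℕ)} ≃ Fin n := Equiv.subtypeUnivEquiv fun _ => Nat.zero_le _
    exact study_submatrix_equiv (e.trans σ) (e.trans τ) A
  have hFn : F n = 1 := by
    have : IsEmpty {m : Fin n // n ≤ (m : ℕ)} := ⟨fun m => absurd m.2 (by omega)⟩
    simp only [F, study, Matrix.det_isEmpty, norm_one]
  rw [← hF0, hstep, hFn, mul_one, DIJ, map_list_prod, List.map_map, ← List.ofFn_eq_map,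
    List.prod_ofFn]
  rfl

/-- Over the quaternions, the norm `ν(D_{I,J}(A))` (hence the absolute value
`|D_{I,J}(A)| = √ν(D_{I,J}(A))`) does not depend on the orderings `I, J`. -/
theorem normSq_DIJ_independent {n : ℕ}
    (A : Matrix (Fin n) (Fin n) ℍ[ℝ]) (hA : Generic A)
    (σ τ σ' τ' : Equiv.Perm (Fin n)) :
    Quaternion.normSq (DIJ A σ τ) = Quaternion.normSq (DIJ A σ' τ') := by
  rw [normSq_DIJ hA, normSq_DIJ hA]
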